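/- (Lemma 1) Suppose a > 0, ∫₁^∞ |N(x) − a·x| / x² dx < ∞, and there is a constant C with |N(x) − a·x| ≤ C·x / log x for all x ≥ 2. Set T(u) = e^{−u} ψ(e^u). Then there exists c > 0 such that for every smooth compactly supported function φ : ℝ → ℂ with support contained in (−c, c), one has sup_{h ∈ ℝ} |∫_ℝ T(u) φ̂(u − h) du| < ∞, where φ̂(u) = ∫_ℝ φ(t) e^{−iut} dt. -/

import Mathlib

open MeasureTheory Real Filter Complex

/-- The generalized integer attached to an exponent vector `α`: `n(α) = ∏ k, (p k)^(α k)`. -/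
noncomputable def beurlingInt (p : ℕ → ℝ) (α : ℕ →₀ ℕ) : ℝ :=
  α.prod fun k e => (p k) ^ e

/-- Counting function of generalized integers: `N(x) = #{α : n(α) < x}`. -/
noncomputable def beurlingN (p : ℕ → ℝ) (x : ℝ) : ℕ :=
  Set.ncard {α : ℕ →₀ ℕ | beurlingInt p α < x}

/-- Chebyshev function `ψ(x) = ∑_{k, m ≥ 1, (p k)^m < x} log (p k)`. -/
noncomputable def beurlingPsi (p : ℕ → ℝ) (x : ℝ) : ℝ :=
  ∑' q : {q : ℕ × ℕ // 1 ≤ q.2 ∧ (p q.1) ^ q.2 < x}, Real.log (p (q : ℕ × ℕ).1)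

/-- The Fourier transform `φ̂(u) = ∫ φ(t) e^{-iut} dt` of a test function. -/
noncomputable def testFT (φ : ℝ → ℂ) (u : ℝ) : ℂ :=
  ∫ t : ℝ, φ t * Complex.exp (-Complex.I * u * t)


/-- `Φ` is integrable and its Fourier transform is bounded by `M`. -/
def FTBound (Φ : ℝ → ℂ) (M : ℝ) : Prop :=
  Integrable Φ ∧ ∀ h : ℝ, ‖∫ t : ℝ, Φ t * cexp (Complex.I * h * t)‖ ≤ M

/-- Laplace transform. -/
noncomputable def lapT (W : ℝ → ℂ) (s : ℂ) : ℂ :=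
  ∫ u in Set.Ioi (0 : ℝ), W u * cexp (-(s * u))

lemma norm_cexp_I_real (x : ℝ) : ‖cexp (Complex.I * x)‖ = 1 := by
  rw [mul_comm]; exact Complex.norm_exp_ofReal_mul_I x

lemma FTBound.add {Φ Ψ : ℝ → ℂ} {M N : ℝ} (h1 : FTBound Φ M) (h2 : FTBound Ψ N) :
    FTBound (fun t => Φ t + Ψ t) (M + N) := by
  have key : ∀ (F : ℝ → ℂ), Integrable F → ∀ h : ℝ,
      Integrable (fun t : ℝ => F t * cexp (Complex.I * h * t)) := by
    intro F hF h
    refine hF.mul_bdd (c := 1) (by fun_prop) (Eventually.of_forall fun t => ?_)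
    have := norm_cexp_I_real (h * t)
    push_cast at this
    rw [mul_assoc, this]
  refine ⟨h1.1.add h2.1, fun h => ?_⟩
  have : ∫ t : ℝ, (Φ t + Ψ t) * cexp (Complex.I * h * t) =
      (∫ t : ℝ, Φ t * cexp (Complex.I * h * t)) + ∫ t : ℝ, Ψ t * cexp (Complex.I * h * t) := by
    rw [← integral_add (key _ h1.1 h) (key _ h2.1 h)]
    congr 1; ext t; ring
  rw [this]
  exact (norm_add_le _ _).trans (add_le_add (h1.2 h) (h2.2 h))

lemma FTBound.smul {Φ : ℝ → ℂ} {M : ℝ} (h1 : FTBound Φ M) (z : ℂ) :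
    FTBound (fun t => z * Φ t) (‖z‖ * M) := by
  refine ⟨h1.1.const_mul z, fun h => ?_⟩
  have : ∫ t : ℝ, (z * Φ t) * cexp (Complex.I * h * t) =
      z * (∫ t : ℝ, Φ t * cexp (Complex.I * h * t)) := by
    rw [← integral_const_mul]
    congr 1; ext t; ring
  rw [this, norm_mul]
  exact mul_le_mul_of_nonneg_left (h1.2 h) (norm_nonneg _)

lemma FTBound.mono {Φ : ℝ → ℂ} {M N : ℝ} (h1 : FTBound Φ M) (h : M ≤ N) : FTBound Φ N :=
  ⟨h1.1, fun x => (h1.2 x).trans h⟩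

lemma fubini_integrable {Φ g : ℝ → ℂ} {μ : Measure ℝ} [SFinite μ] (hΦ : Integrable Φ)
    (hg : Integrable g μ) (l h : ℝ) :
    Integrable (fun z : ℝ × ℝ => Φ z.1 * (g z.2 * cexp (-(Complex.I * l * z.2 * z.1))) *
      cexp (Complex.I * h * z.1)) (volume.prod μ) := by
  have h1 := (hΦ.mul_prod hg).mul_bdd (c := 1)
    (g := fun z : ℝ × ℝ => cexp (Complex.I * ((h * z.1 - l * z.2 * z.1 : ℝ) : ℂ)))
    (by fun_prop) (Eventually.of_forall fun z => by rw [norm_cexp_I_real])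
  refine h1.congr (Eventually.of_forall fun z => ?_)
  simp only
  have : cexp (Complex.I * ((h * z.1 - l * z.2 * z.1 : ℝ) : ℂ)) =
      cexp (-(Complex.I * l * z.2 * z.1)) * cexp (Complex.I * h * z.1) := by
    rw [← Complex.exp_add]; congr 1; push_cast; ring
  rw [this]; ring

lemma fubini_eq {Φ g : ℝ → ℂ} {μ : Measure ℝ} [SFinite μ] (hΦ : Integrable Φ)
    (hg : Integrable g μ) (l h : ℝ) :
    ∫ t : ℝ, (Φ t * ∫ v : ℝ, g v * cexp (-(Complex.I * l * v * t)) ∂μ) *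
      cexp (Complex.I * h * t) =
    ∫ v : ℝ, g v * (∫ t : ℝ, Φ t * cexp (Complex.I * ((h - l * v : ℝ) : ℂ) * t)) ∂μ := by
  have h2 := integral_integral_swap (μ := volume) (ν := μ)
    (f := fun t v : ℝ => Φ t * (g v * cexp (-(Complex.I * l * v * t))) *
      cexp (Complex.I * h * t)) (fubini_integrable hΦ hg l h)
  calc _ = ∫ t : ℝ, ∫ v : ℝ, Φ t * (g v * cexp (-(Complex.I * l * v * t))) *
      cexp (Complex.I * h * t) ∂μ := by
        congr 1; ext t; rw [integral_mul_const, integral_const_mul]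
    _ = _ := by
      rw [h2]
      congr 1; ext v
      rw [← integral_const_mul]
      congr 1; ext t
      have : cexp (Complex.I * ((h - l * v : ℝ) : ℂ) * t) =
          cexp (-(Complex.I * l * v * t)) * cexp (Complex.I * h * t) := by
        rw [← Complex.exp_add]; congr 1; push_cast; ring
      rw [this]; ring

lemma fubini_left {Φ g : ℝ → ℂ} {μ : Measure ℝ} [SFinite μ] (hΦ : Integrable Φ)
    (hg : Integrable g μ) (l : ℝ) :
    Integrable (fun t : ℝ => Φ t * ∫ v : ℝ, g v * cexp (-(Complex.I * l * v * t)) ∂μ) := by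
  have := (fubini_integrable hΦ hg l 0).integral_prod_left
  refine this.congr (Eventually.of_forall fun t => ?_)
  simp [integral_const_mul]

lemma FTBound.mult {Φ g : ℝ → ℂ} {M : ℝ} {μ : Measure ℝ} [SFinite μ] (h1 : FTBound Φ M)
    (hg : Integrable g μ) (l : ℝ) :
    FTBound (fun t : ℝ => Φ t * ∫ v : ℝ, g v * cexp (-(Complex.I * l * v * t)) ∂μ)
      ((∫ v, ‖g v‖ ∂μ) * M) := by
  refine ⟨fubini_left h1.1 hg l, fun h => ?_⟩
  rw [fubini_eq h1.1 hg, ← integral_mul_const]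
  refine norm_integral_le_of_norm_le (hg.norm.mul_const M) (Eventually.of_forall fun v => ?_)
  rw [norm_mul]
  exact mul_le_mul_of_nonneg_left (h1.2 _) (norm_nonneg _)

lemma lapT_eq (W : ℝ → ℂ) (σ t : ℝ) : lapT W (σ + Complex.I * t) =
    ∫ v in Set.Ioi (0 : ℝ), (W v * cexp (-(σ * v))) * cexp (-(Complex.I * (1 : ℝ) * v * t)) := by
  unfold lapT
  congr 1; ext v
  rw [mul_assoc, ← Complex.exp_add]
  congr 2; push_cast; ring

lemma FTBound.lap_mult {Φ W : ℝ → ℂ} {M σ : ℝ} (h1 : FTBound Φ M)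
    (hg : IntegrableOn W (Set.Ioi 0)) (hσ : 0 < σ) :
    FTBound (fun t : ℝ => Φ t * lapT W (σ + Complex.I * t))
      ((∫ v in Set.Ioi (0 : ℝ), ‖W v‖) * M) := by
  have hb : ∀ᵐ v : ℝ ∂(volume.restrict (Set.Ioi (0:ℝ))), ‖cexp (-(σ * v))‖ ≤ 1 := by
    filter_upwards [ae_restrict_mem measurableSet_Ioi] with v hv
    rw [Complex.norm_exp]
    simp only [neg_re, re_ofReal_mul, ofReal_re, Real.exp_le_one_iff]
    have : 0 < σ * v := mul_pos hσ hv
    linarith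
  have hi : IntegrableOn (fun v : ℝ => W v * cexp (-(σ * v))) (Set.Ioi 0) :=
    Integrable.mul_bdd (c := 1) hg (by fun_prop) hb
  have := h1.mult hi 1
  simp only [← lapT_eq] at this
  refine this.mono (mul_le_mul_of_nonneg_right ?_ ((norm_nonneg _).trans (h1.2 0)))
  refine integral_mono_ae hi.norm hg.norm ?_
  filter_upwards [hb] with v hv
  rw [norm_mul]
  exact mul_le_of_le_one_right (norm_nonneg _) hv

lemma lap_integrable_of_bdd {W : ℝ → ℂ} (hW : Measurable W) {K σ : ℝ} (hσ : 0 < σ)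
    (hK : ∀ u > 0, ‖W u‖ ≤ K) {s : ℂ} (hs : s.re = σ) :
    IntegrableOn (fun v : ℝ => W v * cexp (-(s * v))) (Set.Ioi 0) := by
  have h0 : IntegrableOn (fun v : ℝ => cexp (-s * v)) (Set.Ioi 0) :=
    integrableOn_exp_mul_complex_Ioi (by simp [hs, hσ]) 0
  have := Integrable.bdd_mul (c := K) h0 (f := W) hW.aestronglyMeasurable (by
    filter_upwards [ae_restrict_mem measurableSet_Ioi] with v hv using hK v hv)
  simp only [neg_mul] at this
  exact this

lemma testFT_shift (φ : ℝ → ℂ) (u h : ℝ) : testFT φ (u - h) =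
    ∫ t : ℝ, φ t * cexp (Complex.I * ((h - 1 * u : ℝ) : ℂ) * t) := by
  unfold testFT
  congr 1; ext t; congr 2; push_cast; ring

lemma lap_parseval {φ W : ℝ → ℂ} (hφ : Integrable φ) (hW : Measurable W) {K σ ε : ℝ}
    (hε : ε < σ) (hK : ∀ u > 0, ‖W u‖ ≤ K * Real.exp (ε * u)) :
    Integrable (fun t : ℝ => φ t * lapT W (σ + Complex.I * t)) ∧ ∀ h : ℝ,
      ∫ t : ℝ, (φ t * lapT W (σ + Complex.I * t)) * cexp (Complex.I * h * t) =
      ∫ u in Set.Ioi (0 : ℝ), W u * cexp (-(σ * u)) * testFT φ (u - h) := by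
  have hi : IntegrableOn (fun v : ℝ => W v * cexp (-(σ * v))) (Set.Ioi 0) := by
    have := lap_integrable_of_bdd (W := fun u => W u * cexp (-(ε * u))) (K := K)
      (σ := σ - ε) (s := ((σ - ε : ℝ) : ℂ)) (by fun_prop) (by linarith) (fun u hu => ?_) (by simp)
    · refine this.congr_fun (fun v _ => ?_) measurableSet_Ioi
      simp only
      rw [mul_assoc, ← Complex.exp_add]
      congr 2; push_cast; ring
    · rw [norm_mul, Complex.norm_exp]
      have h1 := hK u hu
      have : (-((ε:ℂ) * u)).re = -(ε * u) := by simp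
      rw [this, Real.exp_neg, ← div_eq_mul_inv, div_le_iff₀ (Real.exp_pos _)]
      exact h1
  have h1 := fubini_left hφ hi 1
  simp only [← lapT_eq] at h1
  refine ⟨h1, fun h => ?_⟩
  have h2 := fubini_eq hφ hi 1 h
  simp only [← lapT_eq] at h2
  rw [h2]
  simp only [← testFT_shift]

lemma FTBound.of_lap {φ W : ℝ → ℂ} (hφ : Integrable φ) (hφ2 : Integrable (testFT φ))
    (hW : Measurable W) {K K' σ ε : ℝ} (hK' : 0 ≤ K')
    (hε : ε < σ) (hK : ∀ u > 0, ‖W u‖ ≤ K * Real.exp (ε * u))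
    (hKσ : ∀ u > 0, ‖W u‖ ≤ K' * Real.exp (σ * u)) :
    FTBound (fun t : ℝ => φ t * lapT W (σ + Complex.I * t)) (K' * ∫ u, ‖testFT φ u‖) := by
  obtain ⟨h1, h2⟩ := lap_parseval hφ hW hε hK
  refine ⟨h1, fun h => ?_⟩
  rw [h2 h]
  have hi : Integrable (fun u => testFT φ (u - h)) := hφ2.comp_sub_right h
  calc _ ≤ ∫ u in Set.Ioi (0 : ℝ), K' * ‖testFT φ (u - h)‖ := by
        refine norm_integral_le_of_norm_le (hi.norm.const_mul K').integrableOn ?_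
        filter_upwards [ae_restrict_mem measurableSet_Ioi] with u hu
        rw [norm_mul]
        refine mul_le_mul_of_nonneg_right ?_ (norm_nonneg _)
        rw [norm_mul, Complex.norm_exp]
        have : (-((σ:ℂ) * u)).re = -(σ * u) := by simp
        rw [this, Real.exp_neg, ← div_eq_mul_inv, div_le_iff₀ (Real.exp_pos _)]
        exact hKσ u hu
    _ ≤ ∫ u, K' * ‖testFT φ (u - h)‖ :=
        setIntegral_le_integral (hi.norm.const_mul K')
          (Eventually.of_forall fun u => mul_nonneg hK' (norm_nonneg _))
    _ = _ := by
        rw [integral_const_mul, integral_sub_right_eq_self (fun u => ‖testFT φ u‖) h]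

lemma testFT_integrable {φ : ℝ → ℂ} (hs : HasCompactSupport φ) (hφ : ContDiff ℝ (⊤ : ℕ∞) φ) :
    Integrable (testFT φ) := by
  have h1 := (FourierTransform.fourier (hs.toSchwartzMap hφ)).integrable (μ := volume)
  have h2 := h1.comp_div (g := fun x => (FourierTransform.fourier (hs.toSchwartzMap hφ)) x)
    (R := 2 * π) (by positivity)
  refine h2.congr (Eventually.of_forall fun u => ?_)
  simp only
  rw [SchwartzMap.fourier_coe, Real.fourier_eq']
  unfold testFT
  congr 1; ext t
  simp only [HasCompactSupport.toSchwartzMap_toFun, smul_eq_mul]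
  rw [mul_comm]
  congr 2
  simp
  field_simp

lemma exists_fourier_rep {χ : ℝ → ℂ} (hs : HasCompactSupport χ) (hχ : ContDiff ℝ (⊤ : ℕ∞) χ) :
    ∃ q : ℝ → ℂ, Integrable q ∧ ∀ y : ℝ, χ y = ∫ v, q v * cexp (-(Complex.I * (2 * π) * v * y)) := by
  set f := hs.toSchwartzMap hχ with hf
  refine ⟨FourierTransformInv.fourierInv f, SchwartzMap.integrable _, fun y => ?_⟩
  have h1 : FourierTransform.fourier (FourierTransformInv.fourierInv f) = f :=
    FourierTransform.fourier_fourierInv_eq f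
  have h2 : χ y = f y := by simp [hf]
  rw [h2, ← h1, SchwartzMap.fourier_coe, Real.fourier_eq', h1]
  congr 1; ext t
  rw [smul_eq_mul, mul_comm]
  congr 2
  simp
  ring

lemma lap_integrable {W : ℝ → ℂ} (hW : Measurable W) {K ε : ℝ} {s : ℂ}
    (hε : ε < s.re) (hK : ∀ u > 0, ‖W u‖ ≤ K * Real.exp (ε * u)) :
    IntegrableOn (fun v : ℝ => W v * cexp (-(s * v))) (Set.Ioi 0) := by
  have := lap_integrable_of_bdd (W := fun u => W u * cexp (-(ε * u))) (K := K)
    (σ := s.re - ε) (s := s - ε) (by fun_prop) (by linarith) (fun u hu => ?_) (by simp)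
  · refine this.congr_fun (fun v _ => ?_) measurableSet_Ioi
    simp only
    rw [mul_assoc, ← Complex.exp_add]
    congr 2; ring
  · rw [norm_mul, Complex.norm_exp]
    have h1 := hK u hu
    have : (-((ε:ℂ) * u)).re = -(ε * u) := by simp
    rw [this, Real.exp_neg, ← div_eq_mul_inv, div_le_iff₀ (Real.exp_pos _)]
    exact h1

lemma le_exp_div {ε : ℝ} (hε : 0 < ε) (u : ℝ) : u ≤ (1 / ε) * Real.exp (ε * u) := by
  have := Real.add_one_le_exp (ε * u)
  rw [one_div, ← div_eq_inv_mul, le_div_iff₀ hε]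
  linarith

lemma kernel_integrable {z : ℂ} (hz : 0 < z.re) :
    IntegrableOn (fun u : ℝ => (z * u - 1) * cexp (-(z * u))) (Set.Ioi 0) := by
  refine lap_integrable (W := fun u : ℝ => z * u - 1) (by fun_prop) (ε := z.re / 2)
    (K := ‖z‖ * (1 / (z.re / 2)) + 1) (by linarith) (fun u hu => ?_)
  have h1 := le_exp_div (ε := z.re / 2) (by linarith) u
  have h2 : 1 ≤ Real.exp (z.re / 2 * u) := Real.one_le_exp (by have : 0 < u := hu; positivity)
  have h3 : ‖(u : ℂ)‖ = u := by simp [abs_of_pos (show 0 < u from hu)]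
  calc ‖z * u - 1‖ ≤ ‖z‖ * u + 1 := by
        refine (norm_sub_le _ _).trans ?_
        rw [norm_mul, h3, norm_one]
    _ ≤ ‖z‖ * ((1 / (z.re / 2)) * Real.exp (z.re / 2 * u)) + Real.exp (z.re / 2 * u) := by gcongr
    _ = _ := by ring

lemma integral_kernel {z : ℂ} (hz : 0 < z.re) {l : ℝ} (hl : 0 ≤ l) :
    ∫ u in Set.Ioi l, (z * u - 1) * cexp (-(z * u)) = l * cexp (-(z * l)) := by
  have hd : ∀ x : ℝ, HasDerivAt (fun u : ℝ => -((u : ℂ) * cexp (-(z * u))))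
      ((z * x - 1) * cexp (-(z * x))) x := by
    intro x
    have h0 : HasDerivAt (fun u : ℂ => -(u * cexp (-(z * u))))
        ((z * x - 1) * cexp (-(z * x))) (x : ℂ) := by
      have h1 : HasDerivAt (fun u : ℂ => -(z * u)) (-(z * 1)) (x : ℂ) :=
        ((hasDerivAt_id (x : ℂ)).const_mul z).neg
      have h2 := ((hasDerivAt_id (x : ℂ)).mul h1.cexp).neg
      refine h2.congr_deriv ?_
      simp only [id]
      ring
    exact h0.comp_ofReal
  have ht : Tendsto (fun u : ℝ => -((u : ℂ) * cexp (-(z * u)))) atTop (nhds 0) := by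
    rw [tendsto_zero_iff_norm_tendsto_zero]
    have := tendsto_rpow_mul_exp_neg_mul_atTop_nhds_zero 1 z.re hz
    refine this.congr' ?_
    filter_upwards [eventually_ge_atTop 0] with u hu
    rw [norm_neg, norm_mul, Complex.norm_exp, Real.rpow_one]
    simp [abs_of_nonneg hu]
  have := integral_Ioi_of_hasDerivAt_of_tendsto' (a := l) (fun x _ => hd x)
    ((kernel_integrable hz).mono_set (Set.Ioi_subset_Ioi hl)) ht
  rw [this]; ring

lemma integral_kernel0 {z : ℂ} (hz : 0 < z.re) (l : ℝ) :
    ∫ u in Set.Ioi l, cexp (-(z * u)) = cexp (-(z * l)) / z := by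
  have := integral_exp_mul_complex_Ioi (a := -z) (by simpa using hz) l
  simp only [neg_mul] at this
  rw [this, neg_div_neg_eq]

lemma summable_of_fin {ι : Type*} {P : ι → Prop} [DecidablePred P] (w : ι → ℝ)
    (h : {i | P i}.Finite) : Summable (fun i => if P i then w i else 0) := by
  refine summable_of_hasFiniteSupport (h.subset fun i hi => ?_)
  by_contra hc
  exact hi (if_neg hc)

open Classical in
lemma hasSum_kernel {ι : Type*} [Countable ι] (l w : ι → ℝ) (hw : ∀ i, 0 ≤ w i)
    (hl : ∀ i, 0 ≤ l i) (hfin : ∀ u, {i | l i < u}.Finite) (F : ℝ → ℝ)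
    (hF : ∀ u, F u = ∑' i, if l i < u then w i else 0) (k : ℝ → ℂ)
    (hk : IntegrableOn k (Set.Ioi 0))
    (hkF : IntegrableOn (fun u => ‖k u‖ * F u) (Set.Ioi 0)) :
    HasSum (fun i => w i * ∫ u in Set.Ioi (l i), k u) (∫ u in Set.Ioi 0, k u * F u) ∧
    Summable (fun i => w i * ∫ u in Set.Ioi (l i), ‖k u‖) := by
  let f : ι → ℝ → ℂ := fun i => (Set.Ioi (l i)).indicator (fun u => w i * k u)
  have hsub : ∀ i, Set.Ioi (l i) ⊆ Set.Ioi 0 := fun i => Set.Ioi_subset_Ioi (hl i)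
  have hfi : ∀ i, IntegrableOn (f i) (Set.Ioi 0) := fun i =>
    (hk.const_mul (w i : ℂ)).indicator measurableSet_Ioi
  have hfn : ∀ i u, ‖f i u‖ = ‖k u‖ * if l i < u then w i else 0 := by
    intro i u
    by_cases h : l i < u
    · simp [f, h, abs_of_nonneg (hw i), mul_comm]
    · simp [f, h]
  have hIntg : ∀ i, ∫ u in Set.Ioi 0, f i u = w i * ∫ u in Set.Ioi (l i), k u := by
    intro i
    rw [setIntegral_indicator measurableSet_Ioi, Set.inter_eq_right.2 (hsub i),
      integral_const_mul]
  have hIntgn : ∀ i, ∫ u in Set.Ioi 0, ‖f i u‖ = w i * ∫ u in Set.Ioi (l i), ‖k u‖ := by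
    intro i
    have : (fun u => ‖f i u‖) = (Set.Ioi (l i)).indicator (fun u => w i * ‖k u‖) := by
      ext u
      by_cases h : l i < u
      · simp [f, h, abs_of_nonneg (hw i)]
      · simp [f, h]
    rw [this, setIntegral_indicator measurableSet_Ioi, Set.inter_eq_right.2 (hsub i),
      integral_const_mul]
  have hsum : Summable (fun i => ∫ u in Set.Ioi 0, ‖f i u‖) := by
    refine summable_of_sum_le (c := ∫ u in Set.Ioi 0, ‖k u‖ * F u)
      (fun i => integral_nonneg fun u => norm_nonneg _) (fun s => ?_)
    rw [← integral_finsetSum s (fun i _ => (hfi i).norm)]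
    refine integral_mono (integrable_finsetSum s (fun i _ => (hfi i).norm)) hkF (fun u => ?_)
    simp only [hfn]
    rw [← Finset.mul_sum, hF u]
    refine mul_le_mul_of_nonneg_left ?_ (norm_nonneg _)
    refine (summable_of_fin w (hfin u)).sum_le_tsum s (fun i _ => ?_)
    split_ifs
    · exact hw i
    · exact le_rfl
  constructor
  · have := hasSum_integral_of_summable_integral_norm hfi hsum
    simp only [hIntg] at this
    have e : ∫ u in Set.Ioi 0, k u * F u = ∫ u in Set.Ioi 0, ∑' i, f i u := by
      refine integral_congr_ae (Eventually.of_forall fun u => ?_)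
      simp only
      rw [hF u, Complex.ofReal_tsum, ← tsum_mul_left]
      refine tsum_congr fun i => ?_
      by_cases h : l i < u
      · simp [f, h, mul_comm]
      · simp [f, h]
    rw [e]; exact this
  · simpa only [hIntgn] using hsum

section Beurling
variable {p : ℕ → ℝ}

lemma p_gt (hmono : Monotone p) (hp1 : 1 < p 0) (k : ℕ) : 1 < p k :=
  hp1.trans_le (hmono (Nat.zero_le k))

lemma bInt_single (k m : ℕ) : beurlingInt p (Finsupp.single k m) = p k ^ m := by
  simp [beurlingInt]

lemma bInt_add (α β : ℕ →₀ ℕ) :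
    beurlingInt p (α + β) = beurlingInt p α * beurlingInt p β := by
  unfold beurlingInt
  exact Finsupp.prod_add_index' (by simp) (fun k a b => pow_add _ _ _)

lemma bInt_one_le (hp : ∀ k, 1 < p k) (α : ℕ →₀ ℕ) : 1 ≤ beurlingInt p α := by
  unfold beurlingInt Finsupp.prod
  exact Finset.prod_induction _ (fun x => 1 ≤ x)
    (fun _ _ => one_le_mul_of_one_le_of_one_le) le_rfl (fun k _ => one_le_pow₀ (hp k).le)

lemma bInt_pos (hp : ∀ k, 1 < p k) (α : ℕ →₀ ℕ) : 0 < beurlingInt p α :=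
  one_pos.trans_le (bInt_one_le hp α)

lemma pow_le_bInt (hp : ∀ k, 1 < p k) (α : ℕ →₀ ℕ) (k : ℕ) : p k ^ (α k) ≤ beurlingInt p α := by
  have h : α = (α - Finsupp.single k (α k)) + Finsupp.single k (α k) := by
    ext j; by_cases hj : k = j
    · subst hj; simp
    · simp [hj]
  calc p k ^ (α k) = 1 * p k ^ (α k) := (one_mul _).symm
    _ ≤ beurlingInt p (α - Finsupp.single k (α k)) * p k ^ (α k) :=
      mul_le_mul_of_nonneg_right (bInt_one_le hp _) (pow_nonneg (one_pos.trans (hp k)).le _)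
    _ = beurlingInt p α := by
      conv_rhs => rw [h, bInt_add, bInt_single]

lemma log_bInt (hp : ∀ k, 1 < p k) (α : ℕ →₀ ℕ) :
    Real.log (beurlingInt p α) = ∑ k ∈ α.support, (α k : ℝ) * Real.log (p k) := by
  unfold beurlingInt Finsupp.prod
  rw [Real.log_prod (fun k _ => (pow_pos (one_pos.trans (hp k)) _).ne')]
  simp [Real.log_pow]

lemma bInt_finite (hmono : Monotone p) (hp1 : 1 < p 0) (hptop : Tendsto p atTop atTop) (x : ℝ) :
    {α : ℕ →₀ ℕ | beurlingInt p α < x}.Finite := by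
  have hp := p_gt hmono hp1
  obtain ⟨M, hM⟩ := pow_unbounded_of_one_lt x hp1
  obtain ⟨K, hK⟩ := eventually_atTop.1 (hptop.eventually_ge_atTop x)
  let B : ℕ →₀ ℕ := Finsupp.onFinset (Finset.range K) (fun k => if k < K then M else 0)
    (by intro k hk; by_contra hc; simp at hc hk; omega)
  refine (Set.finite_Iic B).subset (fun α hα => ?_)
  intro k
  have h1 := (pow_le_bInt hp α k).trans_lt hα
  show α k ≤ if k < K then M else 0
  split_ifs with hk
  · by_contra hc
    push Not at hc
    have h2 : p 0 ^ M ≤ p k ^ (α k) :=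
      (pow_le_pow_right₀ hp1.le hc.le).trans
        (pow_le_pow_left₀ (one_pos.trans hp1).le (hmono (Nat.zero_le k)) _)
    linarith
  · by_contra hc
    have h2 : p k ≤ p k ^ (α k) := le_self_pow₀ (hp k).le (by omega)
    have := hK k (by omega)
    linarith

lemma single_inj {q q' : {q : ℕ × ℕ // 1 ≤ q.2}}
    (h : Finsupp.single q.1.1 q.1.2 = Finsupp.single q'.1.1 q'.1.2) : q = q' := by
  rw [Finsupp.single_eq_single_iff] at h
  rcases h with h | h
  · exact Subtype.ext (Prod.ext h.1 h.2)
  · have := q.2; omega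

lemma bPsi_finite (hmono : Monotone p) (hp1 : 1 < p 0) (hptop : Tendsto p atTop atTop) (u : ℝ) :
    {q : {q : ℕ × ℕ // 1 ≤ q.2} | (q.1.2 : ℝ) * Real.log (p q.1.1) < u}.Finite := by
  have hp := p_gt hmono hp1
  refine Set.Finite.of_injOn (f := fun q => Finsupp.single q.1.1 q.1.2) (fun q hq => ?_)
    (fun q _ q' _ h => single_inj h) (bInt_finite hmono hp1 hptop (Real.exp u))
  show beurlingInt p _ < _
  rw [bInt_single, ← Real.log_lt_iff_lt_exp (pow_pos (one_pos.trans (hp _)) _), Real.log_pow]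
  exact hq

open Classical in
lemma bN_eq (hmono : Monotone p) (hp1 : 1 < p 0) (hptop : Tendsto p atTop atTop) (u : ℝ) :
    (beurlingN p (Real.exp u) : ℝ) =
      ∑' α : ℕ →₀ ℕ, if Real.log (beurlingInt p α) < u then (1 : ℝ) else 0 := by
  have hp := p_gt hmono hp1
  have hfin := bInt_finite hmono hp1 hptop (Real.exp u)
  have : ∀ α, Real.log (beurlingInt p α) < u ↔ α ∈ hfin.toFinset := by
    intro α
    rw [Real.log_lt_iff_lt_exp (bInt_pos hp α)]; simp
  simp only [this]
  rw [tsum_eq_sum (s := hfin.toFinset) (fun α hα => if_neg hα)]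
  simp only [beurlingN]
  rw [Set.ncard_eq_toFinset_card _ hfin, Finset.sum_ite_mem, Finset.inter_self]
  simp

open Classical in
lemma bPsi_eq (hmono : Monotone p) (hp1 : 1 < p 0) (u : ℝ) :
    beurlingPsi p (Real.exp u) =
      ∑' q : {q : ℕ × ℕ // 1 ≤ q.2},
        if (q.1.2 : ℝ) * Real.log (p q.1.1) < u then Real.log (p q.1.1) else 0 := by
  have hp := p_gt hmono hp1
  unfold beurlingPsi
  have h1 := tsum_subtype {q : ℕ × ℕ | 1 ≤ q.2 ∧ (p q.1) ^ q.2 < Real.exp u}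
    (fun q => Real.log (p q.1))
  have h2 := tsum_subtype {q : ℕ × ℕ | 1 ≤ q.2}
    (fun q => if (q.2 : ℝ) * Real.log (p q.1) < u then Real.log (p q.1) else 0)
  refine h1.trans (Eq.trans ?_ h2.symm)
  congr 1; ext q
  have : (p q.1) ^ q.2 < Real.exp u ↔ (q.2 : ℝ) * Real.log (p q.1) < u := by
    rw [← Real.log_lt_iff_lt_exp (pow_pos (one_pos.trans (hp _)) _), Real.log_pow]
  simp only [Set.indicator, Set.mem_ofPred_eq, this]
  by_cases ha : 1 ≤ q.2 <;> by_cases hb : (q.2 : ℝ) * Real.log (p q.1) < u <;> simp [ha, hb]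

open Classical in
lemma mono_count {ι : Type*} (l w : ι → ℝ) (hw : ∀ i, 0 ≤ w i)
    (hfin : ∀ u, {i | l i < u}.Finite) :
    Monotone (fun u : ℝ => ∑' i, if l i < u then w i else 0) := by
  intro u v huv
  refine Summable.tsum_le_tsum (fun i => ?_) (summable_of_fin w (hfin u))
    (summable_of_fin w (hfin v))
  have := hw i
  split_ifs with h1 h2
  · exact le_rfl
  · exact absurd (h1.trans_le huv) h2
  · exact this
  · exact le_rfl

lemma bN_mono (hmono : Monotone p) (hp1 : 1 < p 0) (hptop : Tendsto p atTop atTop) :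
    Monotone (fun u : ℝ => (beurlingN p (Real.exp u) : ℝ)) := by
  intro u v huv
  simp only [Nat.cast_le]
  refine Set.ncard_le_ncard (fun α hα => ?_) (bInt_finite hmono hp1 hptop _)
  exact lt_of_lt_of_le (show beurlingInt p α < _ from hα) (Real.exp_le_exp.2 huv)

lemma bPsi_mono (hmono : Monotone p) (hp1 : 1 < p 0) (hptop : Tendsto p atTop atTop) :
    Monotone (fun u : ℝ => beurlingPsi p (Real.exp u)) := by
  classical
  simp only [bPsi_eq hmono hp1]
  exact mono_count (fun q : {q : ℕ × ℕ // 1 ≤ q.2} => (q.1.2 : ℝ) * Real.log (p q.1.1))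
    (fun q => Real.log (p q.1.1)) (fun q => Real.log_nonneg (p_gt hmono hp1 _).le)
    (bPsi_finite hmono hp1 hptop)

lemma bPsi_le (hmono : Monotone p) (hp1 : 1 < p 0) (hptop : Tendsto p atTop atTop)
    {u : ℝ} (hu : 0 ≤ u) :
    beurlingPsi p (Real.exp u) ≤ u * beurlingN p (Real.exp u) := by
  classical
  have hp := p_gt hmono hp1
  have hfin := bPsi_finite hmono hp1 hptop u
  rw [bPsi_eq hmono hp1,
    tsum_eq_sum (s := hfin.toFinset) (fun q hq => if_neg (by simpa using hq))]
  calc _ ≤ ∑ q ∈ hfin.toFinset, u := by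
        refine Finset.sum_le_sum (fun q hq => ?_)
        have hq' : (q.1.2 : ℝ) * Real.log (p q.1.1) < u := by simpa using hq
        rw [if_pos hq']
        refine le_trans ?_ hq'.le
        refine le_mul_of_one_le_left (Real.log_nonneg (hp _).le) ?_
        exact_mod_cast q.2
    _ = u * hfin.toFinset.card := by rw [Finset.sum_const, nsmul_eq_mul, mul_comm]
    _ ≤ _ := by
        refine mul_le_mul_of_nonneg_left ?_ hu
        rw [← Set.ncard_eq_toFinset_card _ hfin, Nat.cast_le]
        refine Set.ncard_le_ncard_of_injOn (fun q => Finsupp.single q.1.1 q.1.2) (fun q hq => ?_)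
          (fun q _ q' _ h => single_inj h) (bInt_finite hmono hp1 hptop (Real.exp u))
        show beurlingInt p _ < _
        rw [bInt_single, ← Real.log_lt_iff_lt_exp (pow_pos (one_pos.trans (hp _)) _), Real.log_pow]
        exact hq

lemma bPsi_nonneg (hmono : Monotone p) (hp1 : 1 < p 0) (x : ℝ) : 0 ≤ beurlingPsi p x :=
  tsum_nonneg fun _ => Real.log_nonneg (p_gt hmono hp1 _).le

lemma bPsi_zero (hmono : Monotone p) (hp1 : 1 < p 0) {x : ℝ} (hx : x ≤ 1) :
    beurlingPsi p x = 0 := by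
  unfold beurlingPsi
  have : IsEmpty {q : ℕ × ℕ // 1 ≤ q.2 ∧ (p q.1) ^ q.2 < x} := by
    refine ⟨fun q => ?_⟩
    have h1 := one_le_pow₀ (n := q.1.2) (p_gt hmono hp1 q.1.1).le
    have h2 := q.2.2
    linarith
  exact tsum_empty

end Beurling

section Dirichlet
variable {p : ℕ → ℝ}

lemma fiber_sum (hp : ∀ k, 1 < p k) (c : ℕ →₀ ℕ) :
    ∑' b : (fun x : (ℕ →₀ ℕ) × {q : ℕ × ℕ // 1 ≤ q.2} =>
      x.1 + Finsupp.single x.2.1.1 x.2.1.2) ⁻¹' {c}, ((Real.log (p b.1.2.1.1) : ℝ) : ℂ) =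
    ((Real.log (beurlingInt p c) : ℝ) : ℂ) := by
  let S : Finset (Σ _ : ℕ, ℕ) := c.support.sigma (fun k => Finset.Icc 1 (c k))
  let e : ((fun x : (ℕ →₀ ℕ) × {q : ℕ × ℕ // 1 ≤ q.2} =>
      x.1 + Finsupp.single x.2.1.1 x.2.1.2) ⁻¹' {c}) → S := fun b =>
    ⟨⟨b.1.2.1.1, b.1.2.1.2⟩, by
      have h1 : b.1.1 + Finsupp.single b.1.2.1.1 b.1.2.1.2 = c := b.2
      have h2 : b.1.1 b.1.2.1.1 + b.1.2.1.2 = c b.1.2.1.1 := by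
        have := DFunLike.congr_fun h1 b.1.2.1.1
        simpa using this
      have h3 := b.1.2.2
      simp only [S, Finset.mem_sigma, Finsupp.mem_support_iff, Finset.mem_Icc]
      omega⟩
  have he : Function.Bijective e := by
    constructor
    · rintro ⟨⟨α, ⟨⟨k, m⟩, hm⟩⟩, hb⟩ ⟨⟨α', ⟨⟨k', m'⟩, hm'⟩⟩, hb'⟩ h
      simp only [e, Subtype.mk.injEq, Sigma.mk.injEq, heq_eq_eq] at h
      obtain ⟨rfl, rfl⟩ := h
      have h1 : α + Finsupp.single k m = c := hb
      have h2 : α' + Finsupp.single k m = c := hb'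
      have : α = α' := add_right_cancel (h1.trans h2.symm)
      subst this
      rfl
    · rintro ⟨⟨k, m⟩, hx⟩
      have hx' := hx
      simp only [S, Finset.mem_sigma, Finsupp.mem_support_iff, Finset.mem_Icc] at hx'
      refine ⟨⟨(c - Finsupp.single k m, ⟨(k, m), hx'.2.1⟩), ?_⟩, rfl⟩
      show c - Finsupp.single k m + Finsupp.single k m = c
      refine tsub_add_cancel_of_le ?_
      rw [Finsupp.single_le_iff]
      exact hx'.2.2
  have h1 := (Equiv.ofBijective e he).tsum_eq (fun x : S => ((Real.log (p x.1.1) : ℝ) : ℂ))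
  have h2 : ∑' x : S, ((Real.log (p x.1.1) : ℝ) : ℂ) = ∑ x ∈ S, ((Real.log (p x.1) : ℝ) : ℂ) :=
    Finset.tsum_subtype S (fun x => ((Real.log (p x.1) : ℝ) : ℂ))
  refine Eq.trans ?_ (h1.trans (h2.trans ?_))
  · rfl
  · rw [Finset.sum_sigma, log_bInt hp]
    push_cast
    refine Finset.sum_congr rfl fun k _ => ?_
    simp

lemma hasSum_mul_aux {ι κ : Type*} {f : ι → ℂ} {g : κ → ℂ} {Z P : ℂ} (hZ : HasSum f Z)
    (hZn : Summable fun i => ‖f i‖) (hP : HasSum g P) (hPn : Summable fun i => ‖g i‖) :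
    HasSum (fun x : ι × κ => f x.1 * g x.2) (Z * P) := by
  have hs : Summable (fun x : ι × κ => f x.1 * g x.2) := by
    apply summable_mul_of_summable_norm hZn hPn
  exact hZ.mul hP hs

lemma dirichlet_product (hp : ∀ k, 1 < p k) {z Z P : ℂ} (hz : z ≠ 0)
    (hZ : HasSum (fun α : ℕ →₀ ℕ => cexp (-(z * ((Real.log (beurlingInt p α) : ℝ) : ℂ))) / z) Z)
    (hZn : Summable (fun α : ℕ →₀ ℕ =>
      ‖cexp (-(z * ((Real.log (beurlingInt p α) : ℝ) : ℂ))) / z‖))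
    (hP : HasSum (fun q : {q : ℕ × ℕ // 1 ≤ q.2} => ((Real.log (p q.1.1) : ℝ) : ℂ) *
      (cexp (-(z * (((q.1.2 : ℝ) * Real.log (p q.1.1) : ℝ) : ℂ))) / z)) P)
    (hPn : Summable (fun q : {q : ℕ × ℕ // 1 ≤ q.2} => ‖((Real.log (p q.1.1) : ℝ) : ℂ) *
      (cexp (-(z * (((q.1.2 : ℝ) * Real.log (p q.1.1) : ℝ) : ℂ))) / z)‖)) :
    HasSum (fun c : ℕ →₀ ℕ => ((Real.log (beurlingInt p c) : ℝ) : ℂ) *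
      cexp (-(z * ((Real.log (beurlingInt p c) : ℝ) : ℂ)))) (z ^ 2 * (Z * P)) := by
  have hprod := hasSum_mul_aux hZ hZn hP hPn
  have hfib := hprod.tsum_fiberwise (fun x : (ℕ →₀ ℕ) × {q : ℕ × ℕ // 1 ≤ q.2} =>
      x.1 + Finsupp.single x.2.1.1 x.2.1.2)
  have hfib2 := hfib.mul_left (z ^ 2)
  refine hfib2.congr_fun fun c => ?_
  symm
  have hterm : ∀ b : (fun x : (ℕ →₀ ℕ) × {q : ℕ × ℕ // 1 ≤ q.2} =>
      x.1 + Finsupp.single x.2.1.1 x.2.1.2) ⁻¹' {c},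
      (cexp (-(z * ((Real.log (beurlingInt p b.1.1) : ℝ) : ℂ))) / z) *
      (((Real.log (p b.1.2.1.1) : ℝ) : ℂ) *
      (cexp (-(z * (((b.1.2.1.2 : ℝ) * Real.log (p b.1.2.1.1) : ℝ) : ℂ))) / z)) =
      ((Real.log (p b.1.2.1.1) : ℝ) : ℂ) *
        (cexp (-(z * ((Real.log (beurlingInt p c) : ℝ) : ℂ))) / z ^ 2) := by
    intro b
    have h1 : b.1.1 + Finsupp.single b.1.2.1.1 b.1.2.1.2 = c := b.2
    have hl : Real.log (beurlingInt p c) = Real.log (beurlingInt p b.1.1) +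
        (b.1.2.1.2 : ℝ) * Real.log (p b.1.2.1.1) := by
      have := congrArg (fun c => Real.log (beurlingInt p c)) h1
      rw [← this, bInt_add, bInt_single,
        Real.log_mul (bInt_pos hp _).ne' (pow_pos (one_pos.trans (hp _)) _).ne', Real.log_pow]
    rw [hl, Complex.ofReal_add, mul_add, neg_add, Complex.exp_add]
    ring
  rw [tsum_congr hterm, tsum_mul_right, fiber_sum hp c]
  field_simp

set_option maxHeartbeats 400000 in
lemma dirichlet_identity (hmono : Monotone p) (hp1 : 1 < p 0) (hptop : Tendsto p atTop atTop)
    {K : ℝ} (hN : ∀ u > 0, (beurlingN p (Real.exp u) : ℝ) ≤ K * Real.exp u)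
    {z : ℂ} (hz : 1 < z.re) :
    ∫ u in Set.Ioi (0:ℝ), (z * u - 1) * cexp (-(z * u)) * (beurlingN p (Real.exp u) : ℝ) =
    z ^ 2 * (∫ u in Set.Ioi (0:ℝ), cexp (-(z * u)) * (beurlingN p (Real.exp u) : ℝ)) *
      ∫ u in Set.Ioi (0:ℝ), cexp (-(z * u)) * (beurlingPsi p (Real.exp u) : ℝ) := by
  classical
  have hp := p_gt hmono hp1
  have hz0 : 0 < z.re := by linarith
  have hzne : z ≠ 0 := by rintro rfl; simp at hz0
  have hK : 0 ≤ K := by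
    have := hN 1 one_pos
    by_contra hc
    push Not at hc
    have h2 : K * Real.exp 1 < 0 := mul_neg_of_neg_of_pos hc (Real.exp_pos _)
    have h3 : (0:ℝ) ≤ beurlingN p (Real.exp 1) := Nat.cast_nonneg _
    linarith
  have hNm := (bN_mono hmono hp1 hptop).measurable
  have hPm := (bPsi_mono hmono hp1 hptop).measurable
  obtain ⟨δ, hδ, hδz⟩ : ∃ δ : ℝ, 0 < δ ∧ 1 + 2 * δ < z.re :=
    ⟨(z.re - 1) / 4, by linarith, by linarith⟩
  -- linear growth bounds
  have hlin : ∀ u > (0:ℝ), ∀ A : ℝ, 0 ≤ A → A * u + 1 ≤ (A / δ + 1) * Real.exp (δ * u) := by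
    intro u hu A hA
    have h1 := le_exp_div hδ u
    have h2 : 1 ≤ Real.exp (δ * u) := Real.one_le_exp (by positivity)
    calc A * u + 1 ≤ A * ((1 / δ) * Real.exp (δ * u)) + Real.exp (δ * u) := by gcongr
      _ = _ := by ring
  have hk0 : IntegrableOn (fun u : ℝ => cexp (-(z * u))) (Set.Ioi 0) := by
    have := integrableOn_exp_mul_complex_Ioi (a := -z) (by simpa using hz0) 0
    simpa only [neg_mul] using this
  have ik1 : IntegrableOn (fun u : ℝ => ‖cexp (-(z * u))‖ * (beurlingN p (Real.exp u) : ℝ))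
      (Set.Ioi 0) := by
    have := (lap_integrable (W := fun u : ℝ => ((beurlingN p (Real.exp u) : ℝ) : ℂ)) (s := z)
      (K := K) (ε := 1) (by fun_prop) hz (fun u hu => by
        simpa using hN u hu)).norm
    refine this.congr (Eventually.of_forall fun u => ?_)
    simp [mul_comm]
  have ik2 : IntegrableOn (fun u : ℝ => ‖(z * u - 1) * cexp (-(z * u))‖ *
      (beurlingN p (Real.exp u) : ℝ)) (Set.Ioi 0) := by
    have := (lap_integrable (W := fun u : ℝ => (z * u - 1) * ((beurlingN p (Real.exp u) : ℝ) : ℂ))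
      (s := z) (K := (‖z‖ / δ + 1) * K) (ε := δ + 1) (by fun_prop) (by linarith) (fun u hu => by
        have h1 : ‖z * u - 1‖ ≤ ‖z‖ * u + 1 := by
          refine (norm_sub_le _ _).trans ?_
          rw [norm_mul, norm_one]; simp [abs_of_pos hu]
        have h2 := h1.trans (hlin u hu ‖z‖ (norm_nonneg _))
        have h3 := hN u hu
        rw [norm_mul, add_mul δ 1 u, Real.exp_add, one_mul]
        calc _ ≤ ((‖z‖ / δ + 1) * Real.exp (δ * u)) * (K * Real.exp u) := by
              refine mul_le_mul h2 (by simpa using h3) (norm_nonneg _) (by positivity)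
          _ = _ := by ring)).norm
    refine this.congr (Eventually.of_forall fun u => ?_)
    simp only [norm_mul]
    simp only [Complex.norm_real, Real.norm_natCast]
    ring
  have ik3 : IntegrableOn (fun u : ℝ => ‖cexp (-(z * u))‖ * beurlingPsi p (Real.exp u))
      (Set.Ioi 0) := by
    have := (lap_integrable (W := fun u : ℝ => ((beurlingPsi p (Real.exp u) : ℝ) : ℂ))
      (s := z) (K := (1 / δ + 1) * K) (ε := δ + 1) (by fun_prop) (by linarith) (fun u hu => by
        have hu' : 0 < u := hu
        have h2 := hlin u hu 1 zero_le_one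
        have h3 := hN u hu
        have h4 := bPsi_le hmono hp1 hptop hu'.le
        rw [Complex.norm_real, Real.norm_of_nonneg (bPsi_nonneg hmono hp1 _), add_mul δ 1 u,
          Real.exp_add, one_mul]
        calc _ ≤ u * beurlingN p (Real.exp u) := h4
          _ ≤ ((1 / δ + 1) * Real.exp (δ * u)) * (K * Real.exp u) := by
              refine mul_le_mul (by linarith) h3 (Nat.cast_nonneg _) (by positivity)
          _ = _ := by ring)).norm
    refine this.congr (Eventually.of_forall fun u => ?_)
    simp only [norm_mul]
    rw [Complex.norm_real, Real.norm_of_nonneg (bPsi_nonneg hmono hp1 _), mul_comm]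
  have hlogn : ∀ α, 0 ≤ Real.log (beurlingInt p α) := fun α => Real.log_nonneg (bInt_one_le hp α)
  have hfinN : ∀ u, {α : ℕ →₀ ℕ | Real.log (beurlingInt p α) < u}.Finite := fun u => by
    refine (bInt_finite hmono hp1 hptop (Real.exp u)).subset fun α hα => ?_
    exact (Real.log_lt_iff_lt_exp (bInt_pos hp α)).1 hα
  obtain ⟨hZ, hZs⟩ := hasSum_kernel (fun α : ℕ →₀ ℕ => Real.log (beurlingInt p α)) (fun _ => 1)
    (fun _ => zero_le_one) hlogn hfinN _ (bN_eq hmono hp1 hptop) _ hk0 ik1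
  obtain ⟨hD, -⟩ := hasSum_kernel (fun α : ℕ →₀ ℕ => Real.log (beurlingInt p α)) (fun _ => 1)
    (fun _ => zero_le_one) hlogn hfinN _ (bN_eq hmono hp1 hptop) _ (kernel_integrable hz0) ik2
  obtain ⟨hP, hPs⟩ := hasSum_kernel
    (fun q : {q : ℕ × ℕ // 1 ≤ q.2} => (q.1.2 : ℝ) * Real.log (p q.1.1))
    (fun q => Real.log (p q.1.1)) (fun q => Real.log_nonneg (hp _).le)
    (fun q => mul_nonneg (Nat.cast_nonneg _) (Real.log_nonneg (hp _).le))
    (bPsi_finite hmono hp1 hptop) _ (bPsi_eq hmono hp1) _ hk0 ik3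
  have hZn : Summable (fun α : ℕ →₀ ℕ => ‖((1:ℝ):ℂ) *
      ∫ u in Set.Ioi (Real.log (beurlingInt p α)), cexp (-(z * u))‖) := by
    refine Summable.of_nonneg_of_le (fun _ => norm_nonneg _) (fun α => ?_) hZs
    rw [norm_mul]
    refine mul_le_mul (by simp) (norm_integral_le_integral_norm _) (norm_nonneg _) zero_le_one
  have hPn : Summable (fun q : {q : ℕ × ℕ // 1 ≤ q.2} => ‖((Real.log (p q.1.1) : ℝ) : ℂ) *
      ∫ u in Set.Ioi ((q.1.2 : ℝ) * Real.log (p q.1.1)), cexp (-(z * u))‖) := by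
    refine Summable.of_nonneg_of_le (fun _ => norm_nonneg _) (fun q => ?_) hPs
    have h0 := Real.log_nonneg (hp q.1.1).le
    rw [norm_mul, Complex.norm_real, Real.norm_of_nonneg h0]
    exact mul_le_mul_of_nonneg_left (norm_integral_le_integral_norm _) h0
  simp only [integral_kernel0 hz0] at hZ hZn hP hPn
  simp only [Complex.ofReal_one, one_mul] at hZ hZn hD
  have hD2 : HasSum (fun c : ℕ →₀ ℕ => ((Real.log (beurlingInt p c) : ℝ) : ℂ) *
      cexp (-(z * ((Real.log (beurlingInt p c) : ℝ) : ℂ)))) _ :=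
    hD.congr_fun (fun c => (integral_kernel hz0 (hlogn c)).symm)
  rw [mul_assoc]
  exact hD2.unique (dirichlet_product hp hzne hZ hZn hP hPn)

end Dirichlet

section Main
variable {p : ℕ → ℝ}

lemma lapT_one {s : ℂ} (hs : 0 < s.re) : lapT (fun _ => 1) s = 1 / s := by
  unfold lapT
  simp only [one_mul]
  rw [integral_kernel0 hs]; simp

lemma lapT_exp {s : ℂ} (hs : 0 < s.re) :
    lapT (fun u : ℝ => ((Real.exp (-u) : ℝ) : ℂ)) s = 1 / (s + 1) := by
  unfold lapT
  have : ∀ u : ℝ, ((Real.exp (-u) : ℝ) : ℂ) * cexp (-(s * u)) = cexp (-((s + 1) * u)) := by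
    intro u
    push_cast
    rw [← Complex.exp_add]; congr 1; ring
  simp only [this]
  rw [integral_kernel0 (by simp; linarith)]; simp

lemma lap_identity (hmono : Monotone p) (hp1 : 1 < p 0) (hptop : Tendsto p atTop atTop)
    {a B : ℝ} {G : ℝ → ℝ} (hG : ∀ u, G u = Real.exp (-u) * beurlingN p (Real.exp u) - a)
    (hB1 : ∀ u > 0, |G u| ≤ B) (hB2 : ∀ u > 0, |u * G u| ≤ B) {s : ℂ} (hs : 0 < s.re) :
    (a + s * lapT (fun u => (G u : ℂ)) s) *
      lapT (fun u => ((Real.exp (-u) * beurlingPsi p (Real.exp u) : ℝ) : ℂ)) s =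
    a * (1 / s * (1 / (s + 1)) * (1 / (s + 1))) + (1 - 1 / (s + 1)) *
      lapT (fun u => ((u * G u : ℝ) : ℂ)) s -
      (1 / (s + 1) - 1 / (s + 1) * (1 / (s + 1))) * lapT (fun u => (G u : ℂ)) s := by
  have hs0 : s ≠ 0 := by rintro rfl; simp at hs
  have hs1 : s + 1 ≠ 0 := by
    intro h
    have := congrArg Complex.re h
    simp at this; linarith
  have hNm := (bN_mono hmono hp1 hptop).measurable
  have hGm : Measurable G := by
    have : G = fun u => Real.exp (-u) * beurlingN p (Real.exp u) - a := funext hG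
    rw [this]; fun_prop
  have hNG : ∀ u, (beurlingN p (Real.exp u) : ℝ) = Real.exp u * (a + G u) := by
    intro u
    rw [hG, add_sub_cancel, ← mul_assoc, ← Real.exp_add]; simp
  have hid := dirichlet_identity (K := |a| + B) hmono hp1 hptop (fun u hu => by
    rw [hNG u, mul_comm]
    refine mul_le_mul_of_nonneg_right ?_ (Real.exp_pos _).le
    exact add_le_add (le_abs_self a) ((le_abs_self _).trans (hB1 u hu))) (z := s + 1)
    (by simpa using hs)
  have i1 : IntegrableOn (fun u : ℝ => (G u : ℂ) * cexp (-(s * u))) (Set.Ioi 0) :=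
    lap_integrable_of_bdd (by fun_prop) hs (K := B) (fun u hu => by
      rw [Complex.norm_real]; exact hB1 u hu) rfl
  have i2 : IntegrableOn (fun u : ℝ => ((u * G u : ℝ) : ℂ) * cexp (-(s * u))) (Set.Ioi 0) :=
    lap_integrable_of_bdd (by fun_prop) hs (K := B) (fun u hu => by
      rw [Complex.norm_real]; exact hB2 u hu) rfl
  have i3 : IntegrableOn (fun u : ℝ => cexp (-(s * u))) (Set.Ioi 0) := by
    have := integrableOn_exp_mul_complex_Ioi (a := -s) (by simpa using hs) 0
    simpa only [neg_mul] using this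
  have i4 := kernel_integrable hs
  have e0 : ∫ u in Set.Ioi (0:ℝ), cexp (-(s * u)) = 1 / s := by
    rw [integral_kernel0 hs]; simp
  have e4 : ∫ u in Set.Ioi (0:ℝ), (s * u - 1) * cexp (-(s * u)) = 0 := by
    rw [integral_kernel hs le_rfl]; simp
  have hexp : ∀ u : ℝ, cexp (-((s + 1) * u)) * ((Real.exp u : ℝ) : ℂ) = cexp (-(s * u)) := by
    intro u
    push_cast
    rw [← Complex.exp_add]; congr 1; ring
  -- Z
  have hZ : ∫ u in Set.Ioi (0:ℝ), cexp (-((s + 1) * u)) * (beurlingN p (Real.exp u) : ℝ) =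
      a * (1 / s) + lapT (fun u => (G u : ℂ)) s := by
    have : ∀ u : ℝ, cexp (-((s + 1) * u)) * ((beurlingN p (Real.exp u) : ℝ) : ℂ) =
        a * cexp (-(s * u)) + (G u : ℂ) * cexp (-(s * u)) := by
      intro u
      rw [hNG u, Complex.ofReal_mul, ← mul_assoc, hexp, Complex.ofReal_add]; ring
    simp only [this]
    rw [integral_add (i3.const_mul _) i1, integral_const_mul, e0]
    rfl
  have hP : ∫ u in Set.Ioi (0:ℝ), cexp (-((s + 1) * u)) * (beurlingPsi p (Real.exp u) : ℝ) =
      lapT (fun u => ((Real.exp (-u) * beurlingPsi p (Real.exp u) : ℝ) : ℂ)) s := by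
    unfold lapT
    refine integral_congr_ae (Eventually.of_forall fun u => ?_)
    simp only
    rw [← hexp u, Complex.ofReal_mul]
    have : ((Real.exp (-u) : ℝ) : ℂ) * ((Real.exp u : ℝ) : ℂ) = 1 := by
      rw [← Complex.ofReal_mul, ← Real.exp_add]; simp
    linear_combination (-(cexp (-((s + 1) * u)) * ((beurlingPsi p (Real.exp u) : ℝ) : ℂ))) * this
  have hD : ∫ u in Set.Ioi (0:ℝ), ((s + 1) * u - 1) * cexp (-((s + 1) * u)) *
      (beurlingN p (Real.exp u) : ℝ) =
      a * (1 / s ^ 2) + (s + 1) * lapT (fun u => ((u * G u : ℝ) : ℂ)) s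
        - lapT (fun u => (G u : ℂ)) s := by
    have : ∀ u : ℝ, ((s + 1) * u - 1) * cexp (-((s + 1) * u)) *
        ((beurlingN p (Real.exp u) : ℝ) : ℂ) =
        ((a * (1 + 1 / s)) * ((s * u - 1) * cexp (-(s * u))) + (a * (1 / s)) * cexp (-(s * u)))
        + ((s + 1) * (((u * G u : ℝ) : ℂ) * cexp (-(s * u))) - (G u : ℂ) * cexp (-(s * u))) := by
      intro u
      rw [hNG u, Complex.ofReal_mul, ← mul_assoc, mul_assoc _ (cexp _), hexp, Complex.ofReal_add,
        Complex.ofReal_mul]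
      field_simp
      ring
    simp only [this]
    have j1 : IntegrableOn (fun u : ℝ => (a * (1 + 1 / s)) * ((s * u - 1) * cexp (-(s * u))) +
        (a * (1 / s)) * cexp (-(s * u))) (Set.Ioi 0) := (i4.const_mul _).add (i3.const_mul _)
    have j2 : IntegrableOn (fun u : ℝ => (s + 1) * (((u * G u : ℝ) : ℂ) * cexp (-(s * u))) -
        (G u : ℂ) * cexp (-(s * u))) (Set.Ioi 0) := (i2.const_mul _).sub i1
    rw [integral_add j1 j2,
      integral_add (i4.const_mul _) (i3.const_mul _), integral_sub (i2.const_mul _) i1,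
      integral_const_mul, integral_const_mul, integral_const_mul, e0, e4]
    unfold lapT
    field_simp
    ring
  rw [hZ, hP, hD] at hid
  generalize lapT (fun u => (G u : ℂ)) s = X at *
  generalize lapT (fun u => ((u * G u : ℝ) : ℂ)) s = Y at *
  generalize lapT (fun u => ((Real.exp (-u) * beurlingPsi p (Real.exp u) : ℝ) : ℂ)) s = T at *
  have h2 : (a + s * X) * T = s * (a * (1 / s ^ 2) + (s + 1) * Y - X) / (s + 1) ^ 2 := by
    rw [hid]; field_simp
  rw [h2]; field_simp; ring

lemma G_bounds (hmono : Monotone p) (hp1 : 1 < p 0) (hptop : Tendsto p atTop atTop)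
    {a C : ℝ} (ha : 0 < a) {G : ℝ → ℝ}
    (hG : ∀ u, G u = Real.exp (-u) * beurlingN p (Real.exp u) - a)
    (hO : ∀ x : ℝ, 2 ≤ x → |(beurlingN p x : ℝ) - a * x| ≤ C * x / Real.log x) :
    ∃ B : ℝ, 0 ≤ B ∧ (∀ u > 0, |G u| ≤ B) ∧ ∀ u > 0, |u * G u| ≤ B := by
  have hl2 : 0 < Real.log 2 := Real.log_pos (by norm_num)
  have hl21 : Real.log 2 < 1 := by have := Real.log_two_lt_d9; linarith
  have hGe : ∀ u, G u = Real.exp (-u) * (beurlingN p (Real.exp u) - a * Real.exp u) := by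
    intro u
    have : Real.exp (-u) * Real.exp u = 1 := by rw [← Real.exp_add]; simp
    rw [hG]; linear_combination a * this
  have hlarge : ∀ u, Real.log 2 ≤ u → |u * G u| ≤ |C| := by
    intro u hu
    have hu0 : 0 < u := hl2.trans_le hu
    have h2 : 2 ≤ Real.exp u := by rwa [← Real.log_le_iff_le_exp (by norm_num)]
    have h3 := hO _ h2
    rw [Real.log_exp] at h3
    rw [hGe, abs_mul, abs_mul, abs_of_pos hu0, abs_of_pos (Real.exp_pos _)]
    calc u * (Real.exp (-u) * |(beurlingN p (Real.exp u) : ℝ) - a * Real.exp u|)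
        ≤ u * (Real.exp (-u) * (C * Real.exp u / u)) := by gcongr
      _ = C * (Real.exp (-u) * Real.exp u) := by field_simp
      _ = C := by rw [← Real.exp_add]; simp
      _ ≤ |C| := le_abs_self C
  have hsmall : ∀ u > 0, u ≤ Real.log 2 → |G u| ≤ beurlingN p 2 + a := by
    intro u hu hu2
    have h1 := bN_mono hmono hp1 hptop hu2
    simp only [Real.exp_log (show (0:ℝ) < 2 by norm_num)] at h1
    have h0 : (0:ℝ) ≤ beurlingN p (Real.exp u) := Nat.cast_nonneg _
    have h3 : Real.exp (-u) ≤ 1 := Real.exp_le_one_iff.2 (by linarith [show 0 < u from hu])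
    have h4 : Real.exp (-u) * beurlingN p (Real.exp u) ≤ 1 * beurlingN p 2 :=
      mul_le_mul h3 h1 h0 zero_le_one
    have h5 : 0 ≤ Real.exp (-u) * beurlingN p (Real.exp u) := by positivity
    have h6 : (0:ℝ) ≤ beurlingN p 2 := Nat.cast_nonneg _
    rw [hG, abs_le]
    constructor <;> linarith
  have hN2 : (0:ℝ) ≤ beurlingN p 2 := Nat.cast_nonneg _
  have hC2 : 0 ≤ |C| / Real.log 2 := by positivity
  have hC3 : |C| ≤ |C| / Real.log 2 := by
    rw [le_div_iff₀ hl2]; nlinarith [abs_nonneg C]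
  refine ⟨beurlingN p 2 + a + |C| / Real.log 2, by positivity, fun u hu => ?_, fun u hu => ?_⟩
  · rcases le_total u (Real.log 2) with h | h
    · linarith [hsmall u hu h]
    · have h1 := hlarge u h
      have h2 : |G u| ≤ |C| / Real.log 2 := by
        rw [le_div_iff₀ hl2, mul_comm]
        refine le_trans ?_ h1
        rw [abs_mul, abs_of_pos (show 0 < u from hu)]
        gcongr
      linarith
  · rcases le_total u (Real.log 2) with h | h
    · have h1 := hsmall u hu h
      rw [abs_mul, abs_of_pos (show 0 < u from hu)]
      nlinarith [abs_nonneg (G u)]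
    · linarith [hlarge u h]

lemma G_integrable {a : ℝ} {G : ℝ → ℝ}
    (hG : ∀ u, G u = Real.exp (-u) * beurlingN p (Real.exp u) - a)
    (hL1 : IntegrableOn (fun x : ℝ => ((beurlingN p x : ℝ) - a * x) / x ^ 2) (Set.Ici 1)) :
    IntegrableOn G (Set.Ioi 0) := by
  have him : Set.image Real.exp (Set.Ioi 0) ⊆ Set.Ici 1 := by
    rintro _ ⟨u, hu, rfl⟩
    exact Real.one_le_exp (le_of_lt hu)
  have h := (integrableOn_image_iff_integrableOn_abs_deriv_smul measurableSet_Ioi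
    (fun x _ => (Real.hasDerivAt_exp x).hasDerivWithinAt) Real.exp_injective.injOn
    (fun x : ℝ => ((beurlingN p x : ℝ) - a * x) / x ^ 2)).1 (hL1.mono_set him)
  refine h.congr_fun (fun u _ => ?_) measurableSet_Ioi
  simp only [smul_eq_mul]
  rw [hG, abs_of_pos (Real.exp_pos u), Real.exp_neg]
  have := (Real.exp_pos u).ne'
  field_simp

end Main

lemma FTBound.bootstrap {Φ : ℝ → ℂ} {M0 K : ℝ} (h0 : FTBound Φ M0)
    (h : ∀ M, FTBound Φ M → FTBound Φ (K + M / 2)) : FTBound Φ (2 * K) := by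
  have hbdd : BddAbove (Set.range fun x : ℝ => ‖∫ t : ℝ, Φ t * cexp (Complex.I * x * t)‖) :=
    ⟨M0, by rintro _ ⟨x, rfl⟩; exact h0.2 x⟩
  set S := ⨆ x : ℝ, ‖∫ t : ℝ, Φ t * cexp (Complex.I * x * t)‖ with hS
  have hM : FTBound Φ S := ⟨h0.1, fun x => le_ciSup hbdd x⟩
  have h1 : S ≤ K + S / 2 := ciSup_le (h S hM).2
  exact hM.mono (by linarith)

lemma exists_cutoff : ∃ q0 q1 : ℝ → ℂ, Integrable q0 ∧ Integrable q1 ∧ ∀ y : ℝ, |y| < 1 →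
    (∫ v, q0 v * cexp (-(Complex.I * (2 * π) * v * y)) = 1) ∧
    (∫ v, q1 v * cexp (-(Complex.I * (2 * π) * v * y)) = Complex.I * y) := by
  let f : ContDiffBump (0 : ℝ) := ⟨1, 2, one_pos, one_lt_two⟩
  have hf : ContDiff ℝ (⊤ : ℕ∞) (fun y : ℝ => ((f y : ℝ) : ℂ)) :=
    Complex.ofRealCLM.contDiff.comp f.contDiff
  have hc : HasCompactSupport (fun y : ℝ => ((f y : ℝ) : ℂ)) :=
    f.hasCompactSupport.comp_left (g := fun x : ℝ => (x : ℂ)) (by simp)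
  have hid : ContDiff ℝ (⊤ : ℕ∞) (fun y : ℝ => (y : ℂ)) := Complex.ofRealCLM.contDiff
  obtain ⟨q0, h0, e0⟩ := exists_fourier_rep hc hf
  obtain ⟨q1, h1, e1⟩ := exists_fourier_rep (χ := fun y : ℝ => (Complex.I * y) * ((f y : ℝ) : ℂ))
    hc.mul_left ((contDiff_const.mul hid).mul hf)
  refine ⟨q0, q1, h0, h1, fun y hy => ?_⟩
  have hfy : f y = 1 := f.one_of_mem_closedBall (by
    simp only [Metric.mem_closedBall, dist_zero_right, Real.norm_eq_abs]; exact hy.le)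
  rw [← e0 y, ← e1 y, hfy]
  simp

lemma core_bound {p : ℕ → ℝ} (hmono : Monotone p) (hp1 : 1 < p 0) (hptop : Tendsto p atTop atTop)
    {a B : ℝ} (ha : 0 < a) {G : ℝ → ℝ}
    (hG : ∀ u, G u = Real.exp (-u) * beurlingN p (Real.exp u) - a) (hB : 0 ≤ B)
    (hB1 : ∀ u > 0, |G u| ≤ B) (hB2 : ∀ u > 0, |u * G u| ≤ B)
    (hGi : IntegrableOn G (Set.Ioi 0)) {q0 q1 : ℝ → ℂ} (hq0 : Integrable q0) (hq1 : Integrable q1)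
    (hq : ∀ y : ℝ, |y| < 1 →
    (∫ v, q0 v * cexp (-(Complex.I * (2 * π) * v * y)) = 1) ∧
    (∫ v, q1 v * cexp (-(Complex.I * (2 * π) * v * y)) = Complex.I * y))
    {c : ℝ} (hc : 0 < c)
    (hcX : c * ((∫ v, ‖q1 v‖) * ∫ v in Set.Ioi (0:ℝ), ‖G v‖) ≤ a / 4)
    {φ : ℝ → ℂ} (hφi : Integrable φ) (hφ2 : Integrable (testFT φ))
    (hφs : ∀ t, φ t ≠ 0 → |t| < c)
    {σ : ℝ} (hσ : 0 < σ)
    (hσX : σ * ((∫ v, ‖q0 v‖) * ∫ v in Set.Ioi (0:ℝ), ‖G v‖) ≤ a / 4) (h : ℝ) :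
    ‖∫ u in Set.Ioi (0:ℝ), ((Real.exp (-u) * beurlingPsi p (Real.exp u) : ℝ) : ℂ) *
      cexp (-(σ * u)) * testFT φ (u - h)‖ ≤
      2 * (1 / a * ((a + 4 * B) * ∫ u, ‖testFT φ u‖)) := by
  have hNm := (bN_mono hmono hp1 hptop).measurable
  have hPm := (bPsi_mono hmono hp1 hptop).measurable
  have hGm : Measurable G := by
    have : G = fun u => Real.exp (-u) * beurlingN p (Real.exp u) - a := funext hG
    rw [this]; fun_prop
  set R := ∫ u, ‖testFT φ u‖ with hR
  have hR0 : 0 ≤ R := integral_nonneg fun _ => norm_nonneg _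
  have hexp1 : ∀ u > 0, 1 ≤ Real.exp (σ * u) := fun u hu =>
    Real.one_le_exp (mul_pos hσ hu).le
  -- bound of T
  have hT0 : ∀ u, 0 ≤ Real.exp (-u) * beurlingPsi p (Real.exp u) := fun u =>
    mul_nonneg (Real.exp_pos _).le (bPsi_nonneg hmono hp1 _)
  have hTK : ∀ ε > 0, ∀ u > 0, ‖((Real.exp (-u) * beurlingPsi p (Real.exp u) : ℝ) : ℂ)‖ ≤
      ((a + B) * (1 / ε)) * Real.exp (ε * u) := by
    intro ε hε u hu
    rw [Complex.norm_real, Real.norm_of_nonneg (hT0 u)]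
    have h1 := bPsi_le hmono hp1 hptop (le_of_lt hu)
    have h2 := (le_abs_self _).trans (hB1 u hu)
    rw [hG u] at h2
    calc Real.exp (-u) * beurlingPsi p (Real.exp u)
        ≤ Real.exp (-u) * (u * beurlingN p (Real.exp u)) := by gcongr
      _ = u * (Real.exp (-u) * beurlingN p (Real.exp u)) := by ring
      _ ≤ (1 / ε * Real.exp (ε * u)) * (a + B) := by
          refine mul_le_mul (le_exp_div hε u) (by linarith) (by positivity) (by positivity)
      _ = _ := by ring
  have hTm : Measurable fun u : ℝ => ((Real.exp (-u) * beurlingPsi p (Real.exp u) : ℝ) : ℂ) := by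
    fun_prop
  have hT := FTBound.of_lap hφi hφ2 hTm (K' := (a + B) * (1 / σ)) (σ := σ) (ε := σ / 2)
    (by positivity) (by linarith) (hTK (σ / 2) (by positivity)) (hTK σ hσ)
  -- bounds of basic pieces
  have hbd : ∀ (W : ℝ → ℂ) (K : ℝ), Measurable W → 0 ≤ K → (∀ u > 0, ‖W u‖ ≤ K) →
      FTBound (fun t : ℝ => φ t * lapT W (σ + Complex.I * t)) (K * R) := by
    intro W K hW hK hWK
    refine FTBound.of_lap hφi hφ2 hW hK (ε := 0) (K := K) hσ (fun u hu => ?_) (fun u hu => ?_)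
    · simpa using hWK u hu
    · exact (hWK u hu).trans (le_mul_of_one_le_right hK (hexp1 u hu))
  have hone := hbd (fun _ => 1) 1 (by fun_prop) zero_le_one (by simp)
  have hg := hbd (fun u => (G u : ℂ)) B (by fun_prop) hB (fun u hu => by
    rw [Complex.norm_real]; exact hB1 u hu)
  have hug := hbd (fun u => ((u * G u : ℝ) : ℂ)) B (by fun_prop) hB (fun u hu => by
    rw [Complex.norm_real]; exact hB2 u hu)
  have hei : IntegrableOn (fun u : ℝ => ((Real.exp (-u) : ℝ) : ℂ)) (Set.Ioi 0) :=
    (integrableOn_exp_neg_Ioi 0).ofReal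
  have hen : ∫ v in Set.Ioi (0:ℝ), ‖((Real.exp (-v) : ℝ) : ℂ)‖ = 1 := by
    simp only [Complex.norm_real, Real.norm_eq_abs, Real.abs_exp]
    rw [integral_exp_neg_Ioi]; simp
  have hemul : ∀ {Φ : ℝ → ℂ} {M : ℝ}, FTBound Φ M → FTBound (fun t : ℝ => Φ t *
      lapT (fun u : ℝ => ((Real.exp (-u) : ℝ) : ℂ)) (σ + Complex.I * t)) M := by
    intro Φ M hΦ
    have := hΦ.lap_mult hei hσ
    rwa [hen, one_mul] at this
  have hGmul : ∀ {Φ : ℝ → ℂ} {M : ℝ}, FTBound Φ M → FTBound (fun t : ℝ => Φ t *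
      lapT (fun u => (G u : ℂ)) (σ + Complex.I * t)) ((∫ v in Set.Ioi (0:ℝ), ‖G v‖) * M) := by
    intro Φ M hΦ
    have := hΦ.lap_mult (W := fun u => (G u : ℂ)) hGi.ofReal hσ
    simpa only [Complex.norm_real] using this
  have hfin : FTBound (fun t : ℝ => φ t * lapT (fun u : ℝ =>
      ((Real.exp (-u) * beurlingPsi p (Real.exp u) : ℝ) : ℂ)) (σ + Complex.I * t))
      (2 * (1 / a * ((a + 4 * B) * R))) := by
    refine hT.bootstrap fun M hM => ?_
    have hM0 : 0 ≤ M := (norm_nonneg _).trans (hM.2 0)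
    have b6 := ((hGmul hM).mult hq0 (2 * π / c)).smul (-(σ : ℂ))
    have b7 := ((hGmul hM).mult hq1 (2 * π / c)).smul (-(c : ℂ))
    have b1 := (hemul (hemul hone)).smul (a : ℂ)
    have b3 := (hemul hug).smul (-1)
    have b4 := (hemul hg).smul (-1)
    have b5 := hemul (hemul hg)
    have tot := ((((((b1.add hug).add b3).add b4).add b5).add b6).add b7).smul ((1 / a : ℝ) : ℂ)
    have hle : ‖((1 / a : ℝ) : ℂ)‖ * (‖(a : ℂ)‖ * (1 * R) + B * R + ‖(-1 : ℂ)‖ * (B * R) +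
        ‖(-1 : ℂ)‖ * (B * R) + B * R +
        ‖-(σ : ℂ)‖ * ((∫ v, ‖q0 v‖) * ((∫ v in Set.Ioi (0:ℝ), ‖G v‖) * M)) +
        ‖-(c : ℂ)‖ * ((∫ v, ‖q1 v‖) * ((∫ v in Set.Ioi (0:ℝ), ‖G v‖) * M))) ≤
        1 / a * ((a + 4 * B) * R) + M / 2 := by
      simp only [norm_neg, Complex.norm_real, norm_one, Real.norm_eq_abs, abs_of_pos ha,
        abs_of_pos hσ, abs_of_pos hc, abs_of_pos (one_div_pos.2 ha)]
      have e1 := mul_le_mul_of_nonneg_right (add_le_add hσX hcX) hM0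
      simp only [Real.norm_eq_abs] at e1
      have e2 : M / 2 = 1 / a * ((a / 4 + a / 4) * M) := by field_simp; ring
      rw [e2, ← mul_add]
      refine mul_le_mul_of_nonneg_left ?_ (by positivity)
      linarith
    have tot2 := tot.mono hle
    convert tot2 using 2 with t
    have hsre : 0 < ((σ : ℂ) + Complex.I * t).re := by simpa using hσ
    have hid := lap_identity hmono hp1 hptop hG hB1 hB2 hsre
    rw [lapT_one hsre, lapT_exp hsre]
    have hs0 : ((σ : ℂ) + Complex.I * t) ≠ 0 := by
      intro h; rw [h] at hsre; simp at hsre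
    by_cases hφt : φ t = 0
    · simp [hφt]
    have hy : |t / c| < 1 := by
      rw [abs_div, abs_of_pos hc, div_lt_one hc]; exact hφs t hφt
    obtain ⟨k0, k1⟩ := hq _ hy
    have hc0 : (c : ℂ) ≠ 0 := by exact_mod_cast hc.ne'
    have ha0 : (a : ℂ) ≠ 0 := by exact_mod_cast ha.ne'
    have hke : ∀ v : ℝ, cexp (-(Complex.I * ((2 * π / c : ℝ) : ℂ) * v * t)) =
        cexp (-(Complex.I * (2 * π) * v * ((t / c : ℝ) : ℂ))) := by
      intro v; congr 1; push_cast; ring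
    simp only [hke]
    rw [k0, k1]
    have hk : (c : ℂ) * (Complex.I * ((t / c : ℝ) : ℂ)) = Complex.I * t := by
      push_cast; field_simp
    generalize lapT (fun u => (G u : ℂ)) (σ + Complex.I * t) = X at *
    generalize lapT (fun u => ((u * G u : ℝ) : ℂ)) (σ + Complex.I * t) = Y at *
    generalize lapT (fun u => ((Real.exp (-u) * beurlingPsi p (Real.exp u) : ℝ) : ℂ))
      (σ + Complex.I * t) = T at *
    generalize 1 / ((σ : ℂ) + Complex.I * t) = o at *
    generalize 1 / ((σ : ℂ) + Complex.I * t + 1) = e at *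
    generalize (Complex.I * ((t / c : ℝ) : ℂ)) = y at *
    have hai : ((1 / a : ℝ) : ℂ) * a = 1 := by push_cast; field_simp
    generalize ((1 / a : ℝ) : ℂ) = b at *
    linear_combination (-(φ t * T)) * hai + (b * φ t) * hid + (b * φ t * T * X) * hk
  have hpar := (lap_parseval hφi hTm (show σ / 2 < σ by linarith)
    (hTK (σ / 2) (by positivity))).2 h
  rw [← hpar]
  exact hfin.2 h

/-- **Lemma 1.** Under the hypotheses of the main theorem, with `T(u) = e^{-u} ψ(e^u)`,
there exists `c > 0` such that for every smooth `φ` supported in `(-c, c)`, the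
convolution averages `∫ T(u) φ̂(u - h) du` are uniformly bounded in `h`. -/
theorem bounded_convolution_averages
    (p : ℕ → ℝ) (hmono : Monotone p) (hp1 : 1 < p 0) (hptop : Tendsto p atTop atTop)
    (a : ℝ) (ha : 0 < a)
    (hL1 : IntegrableOn (fun x : ℝ => ((beurlingN p x : ℝ) - a * x) / x ^ 2) (Set.Ici 1))
    (C : ℝ) (hO : ∀ x : ℝ, 2 ≤ x → |(beurlingN p x : ℝ) - a * x| ≤ C * x / Real.log x) :
    ∃ c : ℝ, 0 < c ∧ ∀ φ : ℝ → ℂ, ContDiff ℝ (⊤ : ℕ∞) φ → tsupport φ ⊆ Set.Ioo (-c) c →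
      ∃ M : ℝ, ∀ h : ℝ,
        ‖∫ u : ℝ, (Real.exp (-u) * beurlingPsi p (Real.exp u) : ℝ) * testFT φ (u - h)‖ ≤ M := by
  set G : ℝ → ℝ := fun u => Real.exp (-u) * beurlingN p (Real.exp u) - a with hGdef
  have hG : ∀ u, G u = Real.exp (-u) * beurlingN p (Real.exp u) - a := fun u => rfl
  obtain ⟨B, hB, hB1, hB2⟩ := G_bounds hmono hp1 hptop ha hG hO
  have hGi := G_integrable hG hL1
  obtain ⟨q0, q1, hq0, hq1, hq⟩ := exists_cutoff
  have hN0 : 0 ≤ ∫ v in Set.Ioi (0:ℝ), ‖G v‖ := integral_nonneg fun _ => norm_nonneg _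
  set X0 := (∫ v, ‖q0 v‖) * ∫ v in Set.Ioi (0:ℝ), ‖G v‖ with hX0
  set X1 := (∫ v, ‖q1 v‖) * ∫ v in Set.Ioi (0:ℝ), ‖G v‖ with hX1
  have hX0' : 0 ≤ X0 := mul_nonneg (integral_nonneg fun _ => norm_nonneg _) hN0
  have hX1' : 0 ≤ X1 := mul_nonneg (integral_nonneg fun _ => norm_nonneg _) hN0
  have small : ∀ X : ℝ, 0 ≤ X → a / (4 * (X + 1)) * X ≤ a / 4 := by
    intro X hX
    rw [div_mul_eq_mul_div, div_le_div_iff₀ (by positivity) (by positivity)]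
    nlinarith
  have hcpos : 0 < a / (4 * (X1 + 1)) := by positivity
  refine ⟨a / (4 * (X1 + 1)), hcpos, fun φ hφ hsupp =>
    ⟨2 * (1 / a * ((a + 4 * B) * ∫ u, ‖testFT φ u‖)), fun h => ?_⟩⟩
  have hcs : HasCompactSupport φ :=
    (isCompact_Icc (a := -(a / (4 * (X1 + 1)))) (b := a / (4 * (X1 + 1)))).of_isClosed_subset
      (isClosed_tsupport φ) (hsupp.trans Set.Ioo_subset_Icc_self)
  have hφi : Integrable φ := hφ.continuous.integrable_of_hasCompactSupport hcs
  have hφ2 := testFT_integrable hcs hφ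
  have hφs : ∀ t, φ t ≠ 0 → |t| < a / (4 * (X1 + 1)) := fun t ht =>
    abs_lt.2 (hsupp (subset_tsupport φ ht))
  have hkey := fun (σ : ℝ) (hσ : 0 < σ) (hσX : σ * X0 ≤ a / 4) =>
    core_bound hmono hp1 hptop ha hG hB hB1 hB2 hGi hq0 hq1 hq hcpos (small X1 hX1') hφi hφ2 hφs
      hσ hσX h
  have hnn : 0 ≤ 2 * (1 / a * ((a + 4 * B) * ∫ u, ‖testFT φ u‖)) := by
    have : 0 ≤ ∫ u, ‖testFT φ u‖ := integral_nonneg fun _ => norm_nonneg _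
    positivity
  by_cases hIntg : Integrable (fun u : ℝ =>
      ((Real.exp (-u) * beurlingPsi p (Real.exp u) : ℝ) : ℂ) * testFT φ (u - h))
  swap
  · rw [integral_undef hIntg]; simpa using hnn
  have hres : ∫ u : ℝ, ((Real.exp (-u) * beurlingPsi p (Real.exp u) : ℝ) : ℂ) * testFT φ (u - h) =
      ∫ u in Set.Ioi (0:ℝ),
        ((Real.exp (-u) * beurlingPsi p (Real.exp u) : ℝ) : ℂ) * testFT φ (u - h) := by
    symm
    refine setIntegral_eq_integral_of_forall_compl_eq_zero fun u hu => ?_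
    have hu' : u ≤ 0 := not_lt.1 hu
    rw [bPsi_zero hmono hp1 (Real.exp_le_one_iff.2 hu')]
    simp
  rw [hres]
  have hlim : Tendsto (fun σ : ℝ => ∫ u in Set.Ioi (0:ℝ),
      ((Real.exp (-u) * beurlingPsi p (Real.exp u) : ℝ) : ℂ) * cexp (-(σ * u)) * testFT φ (u - h))
      (nhdsWithin 0 (Set.Ioi 0)) (nhds (∫ u in Set.Ioi (0:ℝ),
        ((Real.exp (-u) * beurlingPsi p (Real.exp u) : ℝ) : ℂ) * testFT φ (u - h))) := by
    refine tendsto_integral_filter_of_dominated_convergence (fun u : ℝ =>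
      ‖((Real.exp (-u) * beurlingPsi p (Real.exp u) : ℝ) : ℂ) * testFT φ (u - h)‖) ?_ ?_ ?_ ?_
    · refine Eventually.of_forall fun σ => ?_
      have h1 : AEStronglyMeasurable (fun u : ℝ => cexp (-(σ * u)) *
          (((Real.exp (-u) * beurlingPsi p (Real.exp u) : ℝ) : ℂ) * testFT φ (u - h)))
          (volume.restrict (Set.Ioi 0)) :=
        AEStronglyMeasurable.mul (by fun_prop) hIntg.integrableOn.aestronglyMeasurable
      refine h1.congr (Eventually.of_forall fun u => ?_)
      simp only; ring
    · filter_upwards [self_mem_nhdsWithin] with σ hσ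
      filter_upwards [ae_restrict_mem measurableSet_Ioi] with u hu
      have h1 : ‖cexp (-((σ:ℂ) * u))‖ ≤ 1 := by
        rw [Complex.norm_exp]
        simp only [neg_re, re_ofReal_mul, ofReal_re, Real.exp_le_one_iff]
        have : 0 < σ * u := mul_pos hσ hu
        linarith
      rw [mul_right_comm, norm_mul]
      exact mul_le_of_le_one_right (norm_nonneg _) h1
    · exact hIntg.norm.integrableOn
    · refine Eventually.of_forall fun u => ?_
      have hc : Continuous fun σ : ℝ => ((Real.exp (-u) * beurlingPsi p (Real.exp u) : ℝ) : ℂ) *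
          cexp (-(σ * u)) * testFT φ (u - h) := by fun_prop
      have := (hc.tendsto 0).mono_left (nhdsWithin_le_nhds (s := Set.Ioi 0))
      simpa using this
  refine le_of_tendsto hlim.norm ?_
  have hσ0 : 0 < a / (4 * (X0 + 1)) := by positivity
  filter_upwards [Ioo_mem_nhdsGT hσ0] with σ hσ
  exact hkey σ hσ.1 ((mul_le_mul_of_nonneg_right hσ.2.le hX0').trans (small X0 hX0'))
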